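/- There exists an absolute constant c > 0 with the following property. Let m, N be positive integers and let G : ℕ → ℕ. For each positive integer τ and each index j ∈ {1,…,G(τ)}, let an architecture be given by fixed unitaries V^{τ,j}_0,…,V^{τ,j}_τ ∈ U(4m), with circuit map F_{τ,j} : U(4)^τ → U(4m), F_{τ,j}(U_1,…,U_τ) = V^{τ,j}_τ (U_τ ⊗ I_m) ⋯ V^{τ,j}_1 (U_1 ⊗ I_m) V^{τ,j}_0. Let Z be a measurable space with probability measure μ, ρ : Z → ℂ^{4m×4m} measurable with density-matrix values, C > 0, and O : Z → ℂ^{4m×4m} measurable with Hermitian values satisfying ‖O_z‖ ≤ C. Define ℓ_{τ,j}(θ; z) = Re Tr(O_z · F_{τ,j}(θ) · ρ(z) · F_{τ,j}(θ)*), R_{τ,j}(θ) = ∫ ℓ_{τ,j}(θ; z) dμ(z), and R̂_{S,τ,j}(θ) = (1/N) Σ_{i=1}^N ℓ_{τ,j}(θ; z_i) for S ∈ Z^N. Then for every δ ∈ (0,1), with probability at least 1 − δ over S ~ μ^{⊗N}, simultaneously for every positive integer τ, every j ∈ {1,…,G(τ)}, and every θ ∈ U(4)^τ: R_{τ,j}(θ)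 − R̂_{S,τ,j}(θ) ≤ c · C · ( √(τ(1 + log τ)/N) + √(log(G(τ))/N) + √(log(2/δ)/N) ). In particular, this uniform bound applies to the architecture and parameter setting selected data-dependently by any variable-structure optimization procedure. -/

import Mathlib

open MeasureTheory Matrix
open scoped Kronecker ComplexOrder

/-- The ℓ²→ℓ² operator norm (spectral norm) of a complex square matrix. -/
noncomputable def opNorm {n : Type*} [Fintype n] [DecidableEq n] (A : Matrix n n ℂ) : ℝ :=
  ‖Matrix.toEuclideanCLM (𝕜 := ℂ) A‖

/-- The variational unitary circuit: `circuit V U L = V L * (U (L-1) ⊗ I) * ⋯ * (U 0 ⊗ I) * V 0`,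
i.e. `L` layers of 2-qubit gates interleaved with fixed global unitaries on `ℂ^{4m}`. -/
noncomputable def circuit {m : ℕ} (V : ℕ → Matrix (Fin 4 × Fin m) (Fin 4 × Fin m) ℂ)
    (U : ℕ → Matrix (Fin 4) (Fin 4) ℂ) : ℕ → Matrix (Fin 4 × Fin m) (Fin 4 × Fin m) ℂ
  | 0 => V 0
  | (t + 1) => V (t + 1) * (U t ⊗ₖ (1 : Matrix (Fin m) (Fin m) ℂ)) * circuit V U t

/-- The loss `ℓ(θ; z) = Re Tr(O_z · F(θ) · ρ(z) · F(θ)*)`. -/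
noncomputable def qloss {m : ℕ} {Z : Type*}
    (V : ℕ → Matrix (Fin 4 × Fin m) (Fin 4 × Fin m) ℂ) (L : ℕ)
    (O ρ : Z → Matrix (Fin 4 × Fin m) (Fin 4 × Fin m) ℂ)
    (U : ℕ → Matrix (Fin 4) (Fin 4) ℂ) (z : Z) : ℝ :=
  ((O z * circuit V U L * ρ z * (circuit V U L)ᴴ).trace).re

section MatrixNorms

open scoped Matrix.Norms.L2Operator

/-- Pairing a matrix with a density matrix is bounded by the operator norm. -/
lemma norm_trace_mul_density_le {n : Type*} [Fintype n] [DecidableEq n] (A ρ : Matrix n n ℂ)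
    (hρ : ρ.PosSemidef) (htr : ρ.trace = 1) : ‖(A * ρ).trace‖ ≤ ‖A‖ := by
  obtain ⟨k, v, rfl⟩ := Matrix.posSemidef_iff_eq_sum_vecMulVec.mp hρ
  let w : Fin k → EuclideanSpace ℂ n := fun i => WithLp.toLp 2 (v i)
  have hpair : ∀ i, (A * vecMulVec (v i) (star (v i))).trace
      = inner ℂ (w i) (Matrix.toEuclideanCLM (𝕜 := ℂ) A (w i)) := by
    intro i
    rw [Matrix.mul_vecMulVec, Matrix.trace_vecMulVec]
    simp [w, EuclideanSpace.inner_toLp_toLp]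
  have hnorm : ∑ i, ‖w i‖ ^ 2 = 1 := by
    have h : ((∑ i, ‖w i‖ ^ 2 : ℝ) : ℂ) = 1 := by
      rw [← htr, Matrix.trace_sum]
      push_cast
      refine Finset.sum_congr rfl fun i _ => ?_
      rw [Matrix.trace_vecMulVec]
      have := inner_self_eq_norm_sq_to_K (𝕜 := ℂ) (w i)
      rw [EuclideanSpace.inner_toLp_toLp] at this
      exact this.symm
    exact_mod_cast h
  rw [Matrix.mul_sum, Matrix.trace_sum]
  calc ‖∑ i, (A * vecMulVec (v i) (star (v i))).trace‖
      ≤ ∑ i, ‖A‖ * ‖w i‖ ^ 2 := by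
        refine norm_sum_le_of_le _ fun i _ => ?_
        rw [hpair]
        calc _ ≤ ‖w i‖ * ‖Matrix.toEuclideanCLM (𝕜 := ℂ) A (w i)‖ := norm_inner_le_norm _ _
          _ ≤ ‖w i‖ * (‖A‖ * ‖w i‖) := by
            gcongr
            exact (Matrix.toEuclideanCLM (𝕜 := ℂ) A).le_opNorm (w i)
          _ = _ := by ring
    _ = ‖A‖ := by rw [← Finset.mul_sum, hnorm, mul_one]

lemma norm_le_one_of_conjTranspose_mul_self_eq_diagonal {n : Type*} [Fintype n] [DecidableEq n]
    {A : Matrix n n ℂ} {d : n → ℂ} (hA : Aᴴ * A = diagonal d) (hd : ∀ i, ‖d i‖ ≤ 1) :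
    ‖A‖ ≤ 1 := by
  have h := Matrix.l2_opNorm_conjTranspose_mul_self A
  have h' : ‖d‖ ≤ 1 := (pi_norm_le_iff_of_nonneg zero_le_one).2 hd
  rw [hA, Matrix.l2_opNorm_diagonal] at h
  nlinarith [norm_nonneg A]

lemma norm_le_one_of_mem_unitaryGroup {n : Type*} [Fintype n] [DecidableEq n]
    {A : Matrix n n ℂ} (hA : A ∈ Matrix.unitaryGroup n ℂ) : ‖A‖ ≤ 1 := by
  refine norm_le_one_of_conjTranspose_mul_self_eq_diagonal (d := fun _ => 1) ?_ (by simp)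
  rw [Matrix.diagonal_one]
  exact Matrix.mem_unitaryGroup_iff'.1 hA

lemma norm_kronecker_one_le_sum {k n : Type*} [Fintype k] [DecidableEq k] [Fintype n]
    [DecidableEq n] (A : Matrix k k ℂ) :
    ‖A ⊗ₖ (1 : Matrix n n ℂ)‖ ≤ ∑ i, ∑ j, ‖A i j‖ := by
  have hsingle : ∀ i j : k, ‖(Matrix.single i j (1 : ℂ)) ⊗ₖ (1 : Matrix n n ℂ)‖ ≤ 1 := by
    intro i j
    refine norm_le_one_of_conjTranspose_mul_self_eq_diagonal
      (d := fun p => if p.1 = j then 1 else 0) ?_ (fun p => by split_ifs <;> simp)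
    rw [Matrix.conjTranspose_kronecker, ← Matrix.mul_kronecker_mul]
    ext ⟨a, b⟩ ⟨a', b'⟩
    by_cases ha : a = a' <;> by_cases hb : b = b' <;> by_cases hj : a = j <;>
      simp_all [Matrix.kroneckerMap_apply, Matrix.single_apply, Matrix.diagonal_apply,
        eq_comm]
  have hsum : A ⊗ₖ (1 : Matrix n n ℂ)
      = ∑ i, ∑ j, A i j • ((Matrix.single i j (1 : ℂ)) ⊗ₖ (1 : Matrix n n ℂ)) := by
    ext ⟨a, b⟩ ⟨a', b'⟩
    simp [Matrix.sum_apply, Matrix.kroneckerMap_apply, Matrix.single_apply, ite_and]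
  rw [hsum]
  refine norm_sum_le_of_le _ fun i _ => norm_sum_le_of_le _ fun j _ => ?_
  rw [norm_smul]
  exact mul_le_of_le_one_right (norm_nonneg _) (hsingle i j)

lemma norm_circuit_le_one {m : ℕ} {V : ℕ → Matrix (Fin 4 × Fin m) (Fin 4 × Fin m) ℂ}
    {U : ℕ → Matrix (Fin 4) (Fin 4) ℂ} (L : ℕ)
    (hV : ∀ s ≤ L, V s ∈ Matrix.unitaryGroup (Fin 4 × Fin m) ℂ)
    (hU : ∀ t < L, U t ∈ Matrix.unitaryGroup (Fin 4) ℂ) : ‖circuit V U L‖ ≤ 1 := by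
  induction L with
  | zero => exact norm_le_one_of_mem_unitaryGroup (hV 0 le_rfl)
  | succ L ih =>
    have h1 := norm_le_one_of_mem_unitaryGroup (hV (L + 1) le_rfl)
    have h2 : ‖U L ⊗ₖ (1 : Matrix (Fin m) (Fin m) ℂ)‖ ≤ 1 :=
      norm_le_one_of_mem_unitaryGroup
        (Matrix.kronecker_mem_unitary (hU L L.lt_succ_self) (one_mem _))
    have h3 := ih (fun s hs => hV s (by omega)) (fun t ht => hU t (by omega))
    calc _ ≤ ‖V (L + 1)‖ * ‖U L ⊗ₖ (1 : Matrix (Fin m) (Fin m) ℂ)‖ * ‖circuit V U L‖ :=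
          norm_mul₃_le
      _ ≤ 1 * 1 * 1 := by gcongr
      _ = 1 := by norm_num

/-- The circuit map is Lipschitz in its gates, with errors adding up over the layers. -/
lemma norm_circuit_sub_le {m : ℕ} {V : ℕ → Matrix (Fin 4 × Fin m) (Fin 4 × Fin m) ℂ}
    {U W : ℕ → Matrix (Fin 4) (Fin 4) ℂ} {ε : ℝ} (L : ℕ)
    (hV : ∀ s ≤ L, V s ∈ Matrix.unitaryGroup (Fin 4 × Fin m) ℂ)
    (hU : ∀ t < L, U t ∈ Matrix.unitaryGroup (Fin 4) ℂ)
    (hW : ∀ t < L, W t ∈ Matrix.unitaryGroup (Fin 4) ℂ)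
    (hUW : ∀ t < L, ∀ i j, ‖U t i j - W t i j‖ ≤ ε) :
    ‖circuit V U L - circuit V W L‖ ≤ L * (16 * ε) := by
  induction L with
  | zero => simp [circuit]
  | succ L ih =>
    have hVn := norm_le_one_of_mem_unitaryGroup (hV (L + 1) le_rfl)
    have hWn : ‖W L ⊗ₖ (1 : Matrix (Fin m) (Fin m) ℂ)‖ ≤ 1 :=
      norm_le_one_of_mem_unitaryGroup
        (Matrix.kronecker_mem_unitary (hW L L.lt_succ_self) (one_mem _))
    have hcirc := norm_circuit_le_one L (fun s hs => hV s (by omega))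
      (fun t ht => hU t (by omega))
    have hprev := ih (fun s hs => hV s (by omega)) (fun t ht => hU t (by omega))
      (fun t ht => hW t (by omega)) (fun t ht => hUW t (by omega))
    have hgate : ‖(U L - W L) ⊗ₖ (1 : Matrix (Fin m) (Fin m) ℂ)‖ ≤ 16 * ε := by
      refine (norm_kronecker_one_le_sum _).trans ?_
      calc ∑ i, ∑ j, ‖(U L - W L) i j‖ ≤ ∑ _i : Fin 4, ∑ _j : Fin 4, ε :=
            Finset.sum_le_sum fun i _ => Finset.sum_le_sum fun j _ =>
              hUW L L.lt_succ_self i j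
        _ = 16 * ε := by simp; ring
    have hkron : (U L - W L) ⊗ₖ (1 : Matrix (Fin m) (Fin m) ℂ)
        = U L ⊗ₖ (1 : Matrix (Fin m) (Fin m) ℂ) - W L ⊗ₖ (1 : Matrix (Fin m) (Fin m) ℂ) := by
      ext ⟨a, b⟩ ⟨a', b'⟩
      simp [Matrix.kroneckerMap_apply, sub_mul]
    have hsplit : circuit V U (L + 1) - circuit V W (L + 1)
        = V (L + 1) * ((U L - W L) ⊗ₖ (1 : Matrix (Fin m) (Fin m) ℂ)) * circuit V U L
          + V (L + 1) * (W L ⊗ₖ (1 : Matrix (Fin m) (Fin m) ℂ))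
            * (circuit V U L - circuit V W L) := by
      rw [hkron]
      simp only [circuit]
      noncomm_ring
    rw [hsplit]
    calc _ ≤ ‖V (L + 1)‖ * ‖(U L - W L) ⊗ₖ (1 : Matrix (Fin m) (Fin m) ℂ)‖ * ‖circuit V U L‖
          + ‖V (L + 1)‖ * ‖W L ⊗ₖ (1 : Matrix (Fin m) (Fin m) ℂ)‖
            * ‖circuit V U L - circuit V W L‖ :=
          (norm_add_le _ _).trans (add_le_add norm_mul₃_le norm_mul₃_le)
      _ ≤ 1 * (16 * ε) * 1 + 1 * 1 * (L * (16 * ε)) := by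
          have : 0 ≤ 16 * ε := (norm_nonneg _).trans hgate
          gcongr
      _ = ((L + 1 : ℕ) : ℝ) * (16 * ε) := by push_cast; ring

lemma abs_re_trace_conj_density_le {n : Type*} [Fintype n] [DecidableEq n]
    {O A B ρ : Matrix n n ℂ} (hρ : ρ.PosSemidef) (htr : ρ.trace = 1) :
    |((O * A * ρ * Bᴴ).trace).re| ≤ ‖O‖ * ‖A‖ * ‖B‖ := by
  have hcyc : (O * A * ρ * Bᴴ).trace = (Bᴴ * O * A * ρ).trace := by
    rw [Matrix.trace_mul_comm]
    simp only [Matrix.mul_assoc]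
  calc _ ≤ ‖(O * A * ρ * Bᴴ).trace‖ := Complex.abs_re_le_norm _
    _ ≤ ‖Bᴴ * O * A‖ := by rw [hcyc]; exact norm_trace_mul_density_le _ _ hρ htr
    _ ≤ ‖Bᴴ‖ * ‖O‖ * ‖A‖ := norm_mul₃_le
    _ = _ := by rw [Matrix.l2_opNorm_conjTranspose]; ring

variable {m : ℕ} {Z : Type*} {V : ℕ → Matrix (Fin 4 × Fin m) (Fin 4 × Fin m) ℂ} {L : ℕ}
  {O ρ : Z → Matrix (Fin 4 × Fin m) (Fin 4 × Fin m) ℂ} {C : ℝ}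

lemma abs_qloss_le {U : ℕ → Matrix (Fin 4) (Fin 4) ℂ}
    (hV : ∀ s ≤ L, V s ∈ Matrix.unitaryGroup (Fin 4 × Fin m) ℂ)
    (hU : ∀ t < L, U t ∈ Matrix.unitaryGroup (Fin 4) ℂ) {z : Z}
    (hρ : (ρ z).PosSemidef ∧ (ρ z).trace = 1) (hO : opNorm (O z) ≤ C) :
    |qloss V L O ρ U z| ≤ C := by
  have hF := norm_circuit_le_one L hV hU
  have hO' : ‖O z‖ ≤ C := hO
  have hC : 0 ≤ C := (norm_nonneg _).trans hO'
  calc _ ≤ ‖O z‖ * ‖circuit V U L‖ * ‖circuit V U L‖ := abs_re_trace_conj_density_le hρ.1 hρ.2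
    _ ≤ C * 1 * 1 := by gcongr
    _ = C := by ring

lemma abs_qloss_sub_le {U W : ℕ → Matrix (Fin 4) (Fin 4) ℂ} {ε : ℝ}
    (hV : ∀ s ≤ L, V s ∈ Matrix.unitaryGroup (Fin 4 × Fin m) ℂ)
    (hU : ∀ t < L, U t ∈ Matrix.unitaryGroup (Fin 4) ℂ)
    (hW : ∀ t < L, W t ∈ Matrix.unitaryGroup (Fin 4) ℂ)
    (hUW : ∀ t < L, ∀ i j, ‖U t i j - W t i j‖ ≤ ε) {z : Z}
    (hρ : (ρ z).PosSemidef ∧ (ρ z).trace = 1) (hO : opNorm (O z) ≤ C) :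
    |qloss V L O ρ U z - qloss V L O ρ W z| ≤ C * (32 * L * ε) := by
  have hFU := norm_circuit_le_one L hV hU
  have hFW := norm_circuit_le_one L hV hW
  have hsub := norm_circuit_sub_le L hV hU hW hUW
  have hO' : ‖O z‖ ≤ C := hO
  have hC : 0 ≤ C := (norm_nonneg _).trans hO'
  have hsplit : qloss V L O ρ U z - qloss V L O ρ W z
      = ((O z * (circuit V U L - circuit V W L) * ρ z * (circuit V U L)ᴴ).trace).re
        + ((O z * circuit V W L * ρ z * (circuit V U L - circuit V W L)ᴴ).trace).re := by
    simp only [qloss, Matrix.mul_sub, Matrix.sub_mul, Matrix.trace_sub, Complex.sub_re,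
      Matrix.conjTranspose_sub]
    ring
  rw [hsplit]
  calc _ ≤ ‖O z‖ * ‖circuit V U L - circuit V W L‖ * ‖circuit V U L‖
        + ‖O z‖ * ‖circuit V W L‖ * ‖circuit V U L - circuit V W L‖ :=
        (abs_add_le _ _).trans (add_le_add (abs_re_trace_conj_density_le hρ.1 hρ.2)
          (abs_re_trace_conj_density_le hρ.1 hρ.2))
    _ ≤ C * (L * (16 * ε)) * 1 + C * 1 * (L * (16 * ε)) := by
        have : 0 ≤ L * (16 * ε) := (norm_nonneg _).trans hsub
        gcongr
    _ = C * (32 * L * ε) := by ring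

lemma measurable_qloss [MeasurableSpace Z] (hρ : ∀ p q, Measurable fun z => ρ z p q)
    (hO : ∀ p q, Measurable fun z => O z p q) (U : ℕ → Matrix (Fin 4) (Fin 4) ℂ) :
    Measurable (qloss V L O ρ U) := by
  unfold qloss
  simp only [Matrix.trace, Matrix.diag, Matrix.mul_apply]
  fun_prop

end MatrixNorms

section Chaining

open ProbabilityTheory

variable {Z : Type*} [MeasurableSpace Z] {μ : Measure Z} {N : ℕ}

/-- Expected value minus empirical mean of `g` on the sample `S`. -/
noncomputable def generalizationGap (μ : Measure Z) (g : Z → ℝ) (S : Fin N → Z) : ℝ :=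
  (∫ z, g z ∂μ) - (1 / N) * ∑ i, g (S i)

lemma integrable_of_abs_le [IsProbabilityMeasure μ] {g : Z → ℝ} {B : ℝ} (hg : Measurable g)
    (hB : ∀ z, |g z| ≤ B) : Integrable g μ :=
  Integrable.of_bound hg.aestronglyMeasurable B (ae_of_all _ hB)

lemma generalizationGap_sub [IsProbabilityMeasure μ] {g h : Z → ℝ} (hg : Integrable g μ)
    (hh : Integrable h μ) (S : Fin N → Z) :
    generalizationGap μ (fun z => g z - h z) S
      = generalizationGap μ g S - generalizationGap μ h S := by
  simp only [generalizationGap, integral_sub hg hh, Finset.sum_sub_distrib]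
  ring

lemma generalizationGap_le [IsProbabilityMeasure μ] (hN : 0 < N) {g : Z → ℝ} {B : ℝ}
    (hB : ∀ z, |g z| ≤ B) (S : Fin N → Z) : generalizationGap μ g S ≤ 2 * B := by
  have hint : ∫ z, g z ∂μ ≤ B := by
    refine (le_abs_self _).trans ?_
    simpa using norm_integral_le_of_norm_le_const (μ := μ) (f := g) (ae_of_all _ hB)
  have hN' : (0 : ℝ) < N := by exact_mod_cast hN
  have hsum : -(N * B) ≤ ∑ i, g (S i) := by
    have := Finset.sum_le_sum fun i (_ : i ∈ Finset.univ) => (abs_le.1 (hB (S i))).1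
    simpa using this
  have hmean : -B ≤ (1 / N) * ∑ i, g (S i) := by
    rw [one_div, inv_mul_eq_div, le_div_iff₀ hN']
    linarith
  unfold generalizationGap
  linarith

/-- Hoeffding's inequality, with the deviation measured in units of the uniform bound `B`. -/
lemma measure_generalizationGap_gt_le [IsProbabilityMeasure μ] (hN : 0 < N) {g : Z → ℝ} {B : ℝ}
    (hg : Measurable g) (hB : 0 < B) (hgB : ∀ z, |g z| ≤ B) {x : ℝ} (hx : 0 ≤ x) :
    (Measure.pi fun _ : Fin N => μ) {S | B * (x / Real.sqrt N) < generalizationGap μ g S}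
      ≤ ENNReal.ofReal (Real.exp (-(x ^ 2 / 2))) := by
  set P := Measure.pi fun _ : Fin N => μ with hP
  set h : Z → ℝ := fun z => -g z with hh
  set X : Z → ℝ := fun z => h z - ∫ z, h z ∂μ with hX
  have hhm : Measurable h := hg.neg
  have hN' : (0 : ℝ) < N := by exact_mod_cast hN
  have hsub : HasSubgaussianMGF X ((‖B - (-B)‖₊ / 2) ^ 2) μ := by
    refine hasSubgaussianMGF_of_mem_Icc hhm.aemeasurable (ae_of_all _ fun z => ?_)
    have := abs_le.1 (hgB z)
    exact ⟨by simp only [hh]; linarith, by simp only [hh]; linarith⟩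
  have hXm : Measurable X := hhm.sub_const _
  have hindep : iIndepFun (fun (i : Fin N) (S : Fin N → Z) => X (S i)) P :=
    iIndepFun_pi (X := fun _ => X) fun _ => hXm.aemeasurable
  have hsubi : ∀ i ∈ (Finset.univ : Finset (Fin N)),
      HasSubgaussianMGF (fun S : Fin N → Z => X (S i)) ((‖B - (-B)‖₊ / 2) ^ 2) P := by
    intro i _
    have hmp := measurePreserving_eval (fun _ : Fin N => μ) i
    refine HasSubgaussianMGF.of_map (X := X) (Y := Function.eval i) hmp.measurable.aemeasurable ?_
    rw [hP, hmp.map_eq]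
    exact hsub
  have hmain := HasSubgaussianMGF.measure_sum_ge_le_of_iIndepFun hindep hsubi
    (ε := B * x * Real.sqrt N) (by positivity)
  have hcoef : ((∑ _i : Fin N, (‖B - (-B)‖₊ / 2) ^ 2 : NNReal) : ℝ) = N * B ^ 2 := by
    push_cast
    have : |B + B| = 2 * B := by rw [abs_of_pos (by linarith)]; ring
    simp [this]
  rw [← ENNReal.ofReal_le_ofReal_iff (Real.exp_pos _).le] at hmain
  rw [measureReal_def, ENNReal.ofReal_toReal (measure_ne_top _ _)] at hmain
  refine (measure_mono fun S hS => ?_).trans (hmain.trans (le_of_eq ?_))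
  · simp only [Set.mem_ofPred_eq] at hS ⊢
    have hsum : ∑ i, X (S i) = N * generalizationGap μ g S := by
      simp only [hX, hh, generalizationGap, integral_neg, Finset.sum_sub_distrib,
        Finset.sum_neg_distrib]
      simp
      field_simp
      ring
    rw [hsum]
    have hs := Real.mul_self_sqrt hN'.le
    have hs0 : 0 < Real.sqrt N := Real.sqrt_pos.2 hN'
    calc B * x * Real.sqrt N = N * (B * (x / Real.sqrt N)) := by
          field_simp
          nlinarith
      _ ≤ _ := by gcongr
  · congr 2
    have := hcoef
    push_cast at this ⊢
    rw [this, mul_pow, mul_pow, Real.sq_sqrt hN'.le]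
    field_simp

lemma sum_range_succ_mul_half_pow_le (K : ℕ) :
    ∑ k ∈ Finset.range K, ((k : ℝ) + 1) * (1 / 2) ^ k ≤ 4 := by
  have h : ∑ k ∈ Finset.range K, ((k : ℝ) + 1) * (1 / 2) ^ k
      = 4 - (2 * K + 4) * (1 / 2) ^ K := by
    induction K with
    | zero => norm_num
    | succ K ih => rw [Finset.sum_range_succ, ih]; push_cast; ring
  rw [h]
  have : 0 ≤ (2 * (K : ℝ) + 4) * (1 / 2) ^ K := by positivity
  linarith

lemma tsum_half_pow_add_two :
    ∑' k : ℕ, ENNReal.ofReal ((1 / 2) ^ (k + 2)) = ENNReal.ofReal (1 / 2) := by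
  have h := (hasSum_geometric_two).mul_left (1 / 4 : ℝ)
  have h' : HasSum (fun k : ℕ => (1 / 2 : ℝ) ^ (k + 2)) (1 / 2) := by
    have hfun : (fun k : ℕ => (1 / 2 : ℝ) ^ (k + 2)) = fun k => 1 / 4 * (1 / 2) ^ k := by
      funext k
      ring
    rw [hfun, show (1 / 2 : ℝ) = 1 / 4 * 2 by norm_num]
    norm_num at h ⊢
    exact h
  rw [← ENNReal.ofReal_tsum_of_nonneg (fun k => by positivity) h'.summable, h'.tsum_eq]

/-- A generic chaining bound: if a class of functions bounded by `C` has uniform nets at the dyadic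
scales `C / 2 ^ k` with logarithmic cardinality `H * (k + 1)`, then with probability at least
`1 - exp (-u)` all generalization gaps are at most a multiple of `C * √((H + u) / N)`. -/
theorem measure_exists_generalizationGap_gt_le [IsProbabilityMeasure μ] (hN : 0 < N) {T : Type*}
    {f : T → Z → ℝ} {C H u : ℝ} (hC : 0 < C) (hH : 0 ≤ H) (hu : 1 ≤ u)
    (hfm : ∀ θ, Measurable (f θ)) (hfC : ∀ θ z, |f θ z| ≤ C)
    (net : ℕ → Finset T) (hcard : ∀ k, ((net k).card : ℝ) ≤ Real.exp (H * (k + 1)))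
    (hnet : ∀ k θ, ∃ a ∈ net k, ∀ z, |f θ z - f a z| ≤ C * (1 / 2) ^ k) :
    (Measure.pi fun _ : Fin N => μ)
        {S | ∃ θ, 9 * C * Real.sqrt (8 * (H + u) / N) < generalizationGap μ (f θ) S}
      ≤ ENNReal.ofReal (Real.exp (-u)) := by
  classical
  set P := Measure.pi fun _ : Fin N => μ with hP
  set y : ℝ := Real.sqrt (8 * (H + u)) with hy
  have hy0 : 0 ≤ y := Real.sqrt_nonneg _
  have hysq : y ^ 2 = 8 * (H + u) := Real.sq_sqrt (by linarith)
  have hint : ∀ θ, Integrable (f θ) μ := fun θ => integrable_of_abs_le (hfm θ) (hfC θ)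
  let base : Set (Fin N → Z) := ⋃ a ∈ net 0,
    {S | C * (y / Real.sqrt N) < generalizationGap μ (f a) S}
  let pairs : ℕ → Finset (T × T) := fun k =>
    (net k ×ˢ net (k + 1)).filter fun p => ∀ z, |f p.2 z - f p.1 z| ≤ C * 2 * (1 / 2) ^ k
  let level : ℕ → Set (Fin N → Z) := fun k => ⋃ p ∈ pairs k,
    {S | C * 2 * (1 / 2) ^ k * ((k + 1) * y / Real.sqrt N)
      < generalizationGap μ (fun z => f p.2 z - f p.1 z) S}
  have hbase : P base ≤ ENNReal.ofReal (Real.exp (-u) * (1 / 2)) := by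
    calc P base ≤ ∑ a ∈ net 0, ENNReal.ofReal (Real.exp (-(y ^ 2 / 2))) :=
          (measure_biUnion_finset_le _ _).trans (Finset.sum_le_sum fun a _ =>
            measure_generalizationGap_gt_le hN (hfm a) hC (hfC a) hy0)
      _ = ENNReal.ofReal ((net 0).card * Real.exp (-(y ^ 2 / 2))) := by
          rw [Finset.sum_const, nsmul_eq_mul, ENNReal.ofReal_mul (by positivity),
            ENNReal.ofReal_natCast]
      _ ≤ _ := by
          refine ENNReal.ofReal_le_ofReal ?_
          calc _ ≤ Real.exp (H * ((0 : ℕ) + 1)) * Real.exp (-(y ^ 2 / 2)) := by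
                gcongr; exact hcard 0
            _ ≤ Real.exp (-u) * Real.exp (-1) := by
                rw [← Real.exp_add, ← Real.exp_add, Real.exp_le_exp, hysq]
                push_cast
                linarith
            _ ≤ _ := by
                gcongr
                linarith [Real.exp_neg_one_lt_half]
  have hlevel : ∀ k, P (level k) ≤ ENNReal.ofReal (Real.exp (-u) * (1 / 2) ^ (k + 2)) := by
    intro k
    have hk : (0 : ℝ) ≤ k := k.cast_nonneg
    calc P (level k)
        ≤ ∑ p ∈ pairs k, ENNReal.ofReal (Real.exp (-(((k + 1) * y) ^ 2 / 2))) :=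
          (measure_biUnion_finset_le _ _).trans (Finset.sum_le_sum fun p hp =>
            measure_generalizationGap_gt_le hN ((hfm p.2).sub (hfm p.1)) (by positivity)
              (Finset.mem_filter.1 hp).2 (by positivity))
      _ = ENNReal.ofReal ((pairs k).card * Real.exp (-(((k + 1) * y) ^ 2 / 2))) := by
          rw [Finset.sum_const, nsmul_eq_mul, ENNReal.ofReal_mul (by positivity),
            ENNReal.ofReal_natCast]
      _ ≤ _ := by
          refine ENNReal.ofReal_le_ofReal ?_
          have hpc : ((pairs k).card : ℝ)
              ≤ Real.exp (H * (k + 1)) * Real.exp (H * ((k + 1 : ℕ) + 1)) := by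
            calc ((pairs k).card : ℝ) ≤ (net k ×ˢ net (k + 1)).card := by
                  exact_mod_cast Finset.card_filter_le _ _
              _ = (net k).card * (net (k + 1)).card := by
                  rw [Finset.card_product]; push_cast; rfl
              _ ≤ _ := by gcongr <;> apply hcard
          calc _ ≤ Real.exp (H * (k + 1)) * Real.exp (H * ((k + 1 : ℕ) + 1))
                  * Real.exp (-(((k + 1) * y) ^ 2 / 2)) := by gcongr
            _ ≤ Real.exp (-u) * Real.exp ((k + 2 : ℕ) * (-1)) := by
                rw [← Real.exp_add, ← Real.exp_add, ← Real.exp_add, Real.exp_le_exp, mul_pow, hysq]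
                push_cast
                nlinarith [mul_nonneg hH hk, mul_nonneg (sub_nonneg.2 hu) hk, mul_nonneg hk hk,
                  mul_nonneg hH (mul_nonneg hk hk),
                  mul_nonneg (sub_nonneg.2 hu) (mul_nonneg hk hk)]
            _ ≤ _ := by
                rw [Real.exp_nat_mul]
                gcongr
                linarith [Real.exp_neg_one_lt_half]
  have hcover : {S | ∃ θ, 9 * C * Real.sqrt (8 * (H + u) / N) < generalizationGap μ (f θ) S}
      ⊆ base ∪ ⋃ k, level k := by
    rintro S ⟨θ, hθ⟩
    by_contra hS
    simp only [Set.mem_union, Set.mem_iUnion, not_or, not_exists, base, level, Set.mem_ofPred_eq,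
      not_lt] at hS
    obtain ⟨hS0, hS⟩ := hS
    choose a ha hθa using fun k => hnet k θ
    have hroot : Real.sqrt (8 * (H + u) / N) = y / Real.sqrt N :=
      Real.sqrt_div (by linarith) _
    set r := y / Real.sqrt N with hr
    have hr0 : 0 ≤ r := by positivity
    have hstep : ∀ k, generalizationGap μ (f (a (k + 1))) S - generalizationGap μ (f (a k)) S
        ≤ 2 * C * r * (((k : ℝ) + 1) * (1 / 2) ^ k) := by
      intro k
      rw [← generalizationGap_sub (hint _) (hint _)]
      have hmem : (a k, a (k + 1)) ∈ pairs k := by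
        refine Finset.mem_filter.2 ⟨Finset.mk_mem_product (ha k) (ha (k + 1)), fun z => ?_⟩
        have h1 := hθa k z
        have h2 := hθa (k + 1) z
        have h3 : |f (a (k + 1)) z - f (a k) z|
            ≤ |f θ z - f (a k) z| + |f θ z - f (a (k + 1)) z| := by
          rw [abs_sub_comm (f θ z) (f (a (k + 1)) z)]
          exact (abs_sub_le _ (f θ z) _).trans_eq (add_comm _ _)
        have h4 : 0 ≤ C * (1 / 2) ^ k := by positivity
        rw [pow_succ] at h2
        linarith
      refine (hS k _ hmem).trans (le_of_eq ?_)
      rw [hr]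
      ring
    have hlim : ∀ K : ℕ, generalizationGap μ (f θ) S ≤ 9 * C * r + 2 * C * (1 / 2) ^ K := by
      intro K
      have htel := Finset.sum_range_sub (fun k => generalizationGap μ (f (a k)) S) K
      have hsum := Finset.sum_le_sum fun k (_ : k ∈ Finset.range K) => hstep k
      rw [htel, ← Finset.mul_sum] at hsum
      have hfour := mul_le_mul_of_nonneg_left (sum_range_succ_mul_half_pow_le K)
        (show 0 ≤ 2 * C * r by positivity)
      have hzero := hS0 _ (ha 0)
      have hlast := generalizationGap_le (μ := μ) hN (hθa K) S
      rw [generalizationGap_sub (hint _) (hint _)] at hlast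
      linarith
    rw [hroot] at hθ
    have htend : Filter.Tendsto (fun K : ℕ => 9 * C * r + 2 * C * (1 / 2) ^ K) Filter.atTop
        (nhds (9 * C * r + 2 * C * 0)) :=
      ((tendsto_pow_atTop_nhds_zero_of_lt_one (by norm_num) (by norm_num)).const_mul _).const_add _
    have := ge_of_tendsto' htend hlim
    linarith
  calc _ ≤ P (base ∪ ⋃ k, level k) := measure_mono hcover
    _ ≤ P base + ∑' k, P (level k) :=
        (measure_union_le _ _).trans (add_le_add le_rfl (measure_iUnion_le _))
    _ ≤ ENNReal.ofReal (Real.exp (-u) * (1 / 2))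
        + ∑' k : ℕ, ENNReal.ofReal (Real.exp (-u) * (1 / 2) ^ (k + 2)) :=
        add_le_add hbase (ENNReal.tsum_le_tsum hlevel)
    _ = ENNReal.ofReal (Real.exp (-u)) := by
        simp_rw [ENNReal.ofReal_mul (Real.exp_pos (-u)).le]
        rw [ENNReal.tsum_mul_left, tsum_half_pow_add_two, ← mul_add,
          ← ENNReal.ofReal_add (by norm_num) (by norm_num)]
        norm_num

end Chaining

section Nets

lemma exists_finset_section {T I : Type*} [Fintype I] (q : T → I) :
    ∃ s : Finset T, s.card ≤ Fintype.card I ∧ ∀ x, ∃ a ∈ s, q x = q a := by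
  classical
  refine ⟨Finset.univ.image fun y : Set.range q => y.2.choose, ?_, fun x => ?_⟩
  · exact Finset.card_image_le.trans
      (Fintype.card_le_of_injective _ Subtype.val_injective)
  · have hx : q x ∈ Set.range q := ⟨x, rfl⟩
    exact ⟨hx.choose, Finset.mem_image.2 ⟨⟨q x, hx⟩, Finset.mem_univ _, rfl⟩,
      hx.choose_spec.symm⟩

lemma floor_mul_natCast_mem_Icc {x : ℝ} (hx : |x| ≤ 1) (M : ℕ) :
    ⌊x * M⌋ ∈ Finset.Icc (-(M : ℤ)) M := by
  have hM : (0 : ℝ) ≤ M := M.cast_nonneg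
  obtain ⟨h1, h2⟩ := abs_le.1 hx
  rw [Finset.mem_Icc]
  constructor
  · rw [Int.le_floor]
    push_cast
    nlinarith
  · have h : ((⌊x * M⌋ : ℤ) : ℝ) ≤ ((M : ℤ) : ℝ) := by
      push_cast
      exact (Int.floor_le _).trans (by nlinarith)
    exact_mod_cast h

lemma abs_sub_le_inv_of_floor_eq {x y : ℝ} {M : ℕ} (hM : 0 < M) (h : ⌊x * M⌋ = ⌊y * M⌋) :
    |x - y| ≤ 1 / M := by
  have hM' : (0 : ℝ) < M := by exact_mod_cast hM
  have := Int.abs_sub_lt_one_of_floor_eq_floor h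
  rw [← sub_mul, abs_mul, abs_of_pos hM'] at this
  rw [le_div_iff₀ hM']
  exact this.le

/-- Tuples of `τ` two-qubit gates. -/
abbrev GateTuple (τ : ℕ) : Type :=
  {U : ℕ → Matrix (Fin 4) (Fin 4) ℂ // ∀ t < τ, U t ∈ Matrix.unitaryGroup (Fin 4) ℂ}

/-- Rounding the entries to a grid of mesh `1 / M` yields an entrywise `2 / M`-net of the gate
tuples. -/
lemma exists_gateTuple_net (τ : ℕ) {M : ℕ} (hM : 0 < M) :
    ∃ s : Finset (GateTuple τ), s.card ≤ (2 * M + 1) ^ (32 * τ) ∧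
      ∀ θ : GateTuple τ, ∃ a ∈ s, ∀ t < τ, ∀ i j, ‖θ.1 t i j - a.1 t i j‖ ≤ 2 / M := by
  let D := Finset.Icc (-(M : ℤ)) M
  let q : GateTuple τ → (Fin τ × Fin 4 × Fin 4 → D × D) := fun θ p =>
    have hentry := entry_norm_bound_of_unitary (θ.2 p.1 p.1.2) p.2.1 p.2.2
    (⟨⌊(θ.1 p.1 p.2.1 p.2.2).re * M⌋,
        floor_mul_natCast_mem_Icc ((Complex.abs_re_le_norm _).trans hentry) M⟩,
      ⟨⌊(θ.1 p.1 p.2.1 p.2.2).im * M⌋,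
        floor_mul_natCast_mem_Icc ((Complex.abs_im_le_norm _).trans hentry) M⟩)
  obtain ⟨s, hs, hq⟩ := exists_finset_section q
  refine ⟨s, hs.trans (le_of_eq ?_), fun θ => ?_⟩
  · have hD : Fintype.card D = 2 * M + 1 := by
      simp only [D, Fintype.card_coe, Int.card_Icc]
      omega
    rw [Fintype.card_fun, Fintype.card_prod, hD, ← sq, ← pow_mul]
    congr 1
    simp
    ring
  · obtain ⟨a, ha, hqa⟩ := hq θ
    refine ⟨a, ha, fun t ht i j => ?_⟩
    have hcell := congrFun hqa (⟨t, ht⟩, i, j)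
    have hre := abs_sub_le_inv_of_floor_eq (x := (θ.1 t i j).re) (y := (a.1 t i j).re) hM
      (congrArg Subtype.val (congrArg Prod.fst hcell))
    have him := abs_sub_le_inv_of_floor_eq (x := (θ.1 t i j).im) (y := (a.1 t i j).im) hM
      (congrArg Subtype.val (congrArg Prod.snd hcell))
    rw [← Complex.sub_re] at hre
    rw [← Complex.sub_im] at him
    calc _ ≤ |(θ.1 t i j - a.1 t i j).re| + |(θ.1 t i j - a.1 t i j).im| :=
          Complex.norm_le_abs_re_add_abs_im _
      _ ≤ 1 / M + 1 / M := add_le_add hre him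
      _ = 2 / M := by ring

/-- The metric entropy of `τ`-gate tuples at scale `2 ^ (-k) / τ`. -/
lemma gateTuple_net_card_le_exp {τ : ℕ} (hτ : 0 < τ) (k : ℕ) :
    (((2 * (64 * τ * 2 ^ k) + 1) ^ (32 * τ) : ℕ) : ℝ)
      ≤ Real.exp (192 * (τ * (1 + Real.log τ)) * (k + 1)) := by
  have hτ' : (1 : ℝ) ≤ τ := by exact_mod_cast hτ
  have hlog : 0 ≤ Real.log τ := Real.log_nonneg hτ'
  have hk : (0 : ℝ) ≤ k := k.cast_nonneg
  have h2k : (1 : ℝ) ≤ 2 ^ k := one_le_pow₀ (by norm_num)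
  have hconst : (192 : ℝ) ≤ Real.exp 6 := by
    have h : (2.7 : ℝ) ^ 6 ≤ Real.exp 1 ^ 6 := by
      gcongr
      linarith [Real.exp_one_gt_d9]
    rw [← Real.exp_nat_mul] at h
    norm_num at h ⊢
    linarith
  have hpow : (2 : ℝ) ^ k ≤ Real.exp k := by
    have h : (2 : ℝ) ^ k ≤ Real.exp 1 ^ k := by
      gcongr
      linarith [Real.exp_one_gt_d9]
    rwa [← Real.exp_nat_mul, mul_one] at h
  have hbase : 2 * (64 * (τ : ℝ) * 2 ^ k) + 1 ≤ Real.exp (6 + Real.log τ + k) := by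
    calc 2 * (64 * (τ : ℝ) * 2 ^ k) + 1 ≤ 192 * τ * 2 ^ k := by nlinarith
      _ ≤ Real.exp 6 * τ * Real.exp k := by gcongr
      _ = _ := by rw [Real.exp_add, Real.exp_add, Real.exp_log (by linarith)]
  push_cast
  calc _ ≤ Real.exp (6 + Real.log τ + k) ^ (32 * τ) := by gcongr
    _ = Real.exp ((32 * τ) * (6 + Real.log τ + k)) := by
        rw [← Real.exp_nat_mul]
        push_cast
        rfl
    _ ≤ _ := by
        rw [Real.exp_le_exp]
        have h : 6 + Real.log τ + k ≤ 6 * ((1 + Real.log τ) * (k + 1)) := by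
          nlinarith [mul_nonneg hlog hk]
        calc _ ≤ (32 * τ : ℝ) * (6 * ((1 + Real.log τ) * (k + 1))) := by gcongr
          _ = _ := by ring

end Nets

/-- The uniform deviation bound for a single architecture. -/
theorem measure_exists_qloss_gap_gt_le {m N τ : ℕ} (hN : 0 < N) (hτ : 0 < τ)
    {V : ℕ → Matrix (Fin 4 × Fin m) (Fin 4 × Fin m) ℂ}
    (hV : ∀ s ≤ τ, V s ∈ Matrix.unitaryGroup (Fin 4 × Fin m) ℂ)
    {Z : Type*} [MeasurableSpace Z] {μ : Measure Z} [IsProbabilityMeasure μ]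
    {O ρ : Z → Matrix (Fin 4 × Fin m) (Fin 4 × Fin m) ℂ}
    (hρm : ∀ p q, Measurable fun z => ρ z p q)
    (hρ : ∀ z, (ρ z).PosSemidef ∧ (ρ z).trace = 1) {C : ℝ} (hC : 0 < C)
    (hOm : ∀ p q, Measurable fun z => O z p q) (hO : ∀ z, opNorm (O z) ≤ C)
    {u : ℝ} (hu : 1 ≤ u) :
    (Measure.pi fun _ : Fin N => μ) {S | ∃ θ : GateTuple τ,
        9 * C * Real.sqrt (8 * (192 * (τ * (1 + Real.log τ)) + u) / N)
          < generalizationGap μ (qloss V τ O ρ θ.1) S}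
      ≤ ENNReal.ofReal (Real.exp (-u)) := by
  have hτ' : (1 : ℝ) ≤ τ := by exact_mod_cast hτ
  have hlog : 0 ≤ Real.log τ := Real.log_nonneg hτ'
  choose net hcard hnet using fun k : ℕ =>
    exists_gateTuple_net τ (M := 64 * τ * 2 ^ k) (by positivity)
  refine measure_exists_generalizationGap_gt_le hN hC (by positivity) hu
    (fun θ => measurable_qloss hρm hOm θ.1)
    (fun θ z => abs_qloss_le hV θ.2 (hρ z) (hO z)) net
    (fun k => le_trans (by exact_mod_cast hcard k) (gateTuple_net_card_le_exp hτ k))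
    fun k θ => ?_
  obtain ⟨a, ha, hθa⟩ := hnet k θ
  refine ⟨a, ha, fun z => (abs_qloss_sub_le hV θ.2 a.2 hθa (hρ z) (hO z)).trans (le_of_eq ?_)⟩
  rw [one_div, inv_pow]
  push_cast
  field_simp
  norm_num

lemma sqrt_add_three_le {a b c : ℝ} (ha : 0 ≤ a) (hb : 0 ≤ b) (hc : 0 ≤ c) :
    Real.sqrt (a + b + c) ≤ Real.sqrt a + Real.sqrt b + Real.sqrt c := by
  rw [Real.sqrt_le_left (by positivity)]
  nlinarith [Real.sq_sqrt ha, Real.sq_sqrt hb, Real.sq_sqrt hc,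
    mul_nonneg (Real.sqrt_nonneg a) (Real.sqrt_nonneg b),
    mul_nonneg (Real.sqrt_nonneg a) (Real.sqrt_nonneg c),
    mul_nonneg (Real.sqrt_nonneg b) (Real.sqrt_nonneg c)]

lemma nine_mul_sqrt_deviation_le {C n T g d τ : ℝ} (hC : 0 < C) (hn : 0 < n) (hg : 0 ≤ g)
    (hd : 0 ≤ d) (hτ : 0 ≤ τ) (hτT : τ ≤ T) :
    9 * C * Real.sqrt (8 * (192 * T + (g + d + τ)) / n)
      ≤ 360 * C * (Real.sqrt (T / n) + Real.sqrt (g / n) + Real.sqrt (d / n)) := by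
  have hT : 0 ≤ T := hτ.trans hτT
  calc 9 * C * Real.sqrt (8 * (192 * T + (g + d + τ)) / n)
      ≤ 9 * C * Real.sqrt (40 ^ 2 * (T / n + g / n + d / n)) := by
        gcongr
        rw [← add_div, ← add_div, mul_div_assoc']
        exact div_le_div_of_nonneg_right (by linarith) hn.le
    _ = 360 * C * Real.sqrt (T / n + g / n + d / n) := by
        rw [Real.sqrt_mul (by norm_num), Real.sqrt_sq (by norm_num)]
        ring
    _ ≤ _ := by
        gcongr
        exact sqrt_add_three_le (by positivity) (by positivity) (by positivity)

/-- Generalization bound for variable-structure QMLMs: uniformly over all numbers `τ ≥ 1` of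
trainable gates, over all `G τ` architectures with `τ` gates, and over all parameter settings,
the generalization error is bounded by
`c·C·(√(τ(1+log τ)/N) + √(log(G τ)/N) + √(log(2/δ)/N))`. -/
theorem variable_structure_qmlm_generalization :
    ∃ c : ℝ, 0 < c ∧
      ∀ (m N : ℕ), 0 < m → 0 < N →
      ∀ G : ℕ → ℕ,
      ∀ V : ℕ → ℕ → ℕ → Matrix (Fin 4 × Fin m) (Fin 4 × Fin m) ℂ,
        (∀ τ, 0 < τ → ∀ j < G τ, ∀ s ≤ τ, V τ j s ∈ Matrix.unitaryGroup (Fin 4 × Fin m) ℂ) →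
      ∀ (Z : Type) (_ : MeasurableSpace Z) (μ : Measure Z), IsProbabilityMeasure μ →
      ∀ ρ : Z → Matrix (Fin 4 × Fin m) (Fin 4 × Fin m) ℂ,
        (∀ p q, Measurable fun z => ρ z p q) →
        (∀ z, (ρ z).PosSemidef ∧ (ρ z).trace = 1) →
      ∀ C : ℝ, 0 < C →
      ∀ O : Z → Matrix (Fin 4 × Fin m) (Fin 4 × Fin m) ℂ,
        (∀ p q, Measurable fun z => O z p q) →
        (∀ z, (O z).IsHermitian ∧ opNorm (O z) ≤ C) →
      ∀ δ : ℝ, 0 < δ → δ < 1 →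
        ENNReal.ofReal (1 - δ) ≤
          (Measure.pi fun _ : Fin N => μ) {S |
            ∀ τ, 0 < τ → ∀ j < G τ,
            ∀ U : ℕ → Matrix (Fin 4) (Fin 4) ℂ,
              (∀ t < τ, U t ∈ Matrix.unitaryGroup (Fin 4) ℂ) →
            (∫ z, qloss (V τ j) τ O ρ U z ∂μ) - (1 / N) * ∑ i, qloss (V τ j) τ O ρ U (S i)
              ≤ c * C * (Real.sqrt (τ * (1 + Real.log τ) / N)
                  + Real.sqrt (Real.log (G τ) / N)
                  + Real.sqrt (Real.log (2 / δ) / N))} := by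
  refine ⟨360, by norm_num, ?_⟩
  intro m N _ hN G V hV Z _ μ _ ρ hρm hρ C hC O hOm hO δ hδ0 hδ1
  have hn : (0 : ℝ) < N := by exact_mod_cast hN
  set P := Measure.pi fun _ : Fin N => μ with hP
  set d := Real.log (2 / δ) with hd
  have hd0 : 0 ≤ d := Real.log_nonneg (by rw [le_div_iff₀ hδ0]; linarith)
  let u : ℕ → ℝ := fun τ => Real.log (G τ) + d + τ
  let bad : ℕ → ℕ → Set (Fin N → Z) := fun τ j => {S | ∃ θ : GateTuple τ,
    9 * C * Real.sqrt (8 * (192 * (τ * (1 + Real.log τ)) + u τ) / N)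
      < generalizationGap μ (qloss (V τ j) τ O ρ θ.1) S}
  let allBad : Set (Fin N → Z) := ⋃ k : ℕ, ⋃ j ∈ Finset.range (G (k + 1)), bad (k + 1) j
  have hlayer : ∀ k : ℕ, P (⋃ j ∈ Finset.range (G (k + 1)), bad (k + 1) j)
      ≤ ENNReal.ofReal (δ / 2 * (1 / 2) ^ k) := by
    intro k
    rcases Nat.eq_zero_or_pos (G (k + 1)) with hG | hG
    · simp [hG]
    have hG' : (1 : ℝ) ≤ G (k + 1) := by exact_mod_cast hG
    have hu : 1 ≤ u (k + 1) := by
      have := Real.log_nonneg hG'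
      have hk : (0 : ℝ) ≤ k := k.cast_nonneg
      simp only [u]
      push_cast
      linarith
    calc _ ≤ ∑ j ∈ Finset.range (G (k + 1)), ENNReal.ofReal (Real.exp (-u (k + 1))) :=
          (measure_biUnion_finset_le _ _).trans (Finset.sum_le_sum fun j hj =>
            measure_exists_qloss_gap_gt_le hN k.succ_pos
              (hV (k + 1) k.succ_pos j (Finset.mem_range.1 hj)) hρm hρ hC hOm
              (fun z => (hO z).2) hu)
      _ = ENNReal.ofReal (G (k + 1) * Real.exp (-u (k + 1))) := by
          rw [Finset.sum_const, Finset.card_range, nsmul_eq_mul,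
            ENNReal.ofReal_mul (by positivity), ENNReal.ofReal_natCast]
      _ ≤ _ := by
          refine ENNReal.ofReal_le_ofReal ?_
          have hexp : Real.exp (-u (k + 1))
              = (G (k + 1) : ℝ)⁻¹ * (δ / 2) * Real.exp (-1) ^ (k + 1) := by
            have hsplit : -u (k + 1)
                = -Real.log (G (k + 1)) + -d + ((k + 1 : ℕ) : ℝ) * (-1) := by
              simp only [u]
              ring
            rw [hsplit, Real.exp_add, Real.exp_add, Real.exp_neg, Real.exp_neg,
              Real.exp_log (by linarith), hd, Real.exp_log (by positivity), inv_div,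
              Real.exp_nat_mul]
          have hhalf : Real.exp (-1) ^ (k + 1) ≤ (1 / 2) ^ k := by
            calc Real.exp (-1) ^ (k + 1) ≤ (1 / 2) ^ (k + 1) := by
                  gcongr
                  linarith [Real.exp_neg_one_lt_half]
              _ ≤ (1 / 2) ^ k := pow_le_pow_of_le_one (by norm_num) (by norm_num) k.le_succ
          rw [hexp]
          calc _ = δ / 2 * Real.exp (-1) ^ (k + 1) := by field_simp
            _ ≤ _ := by gcongr
  have hallBad : P allBad ≤ ENNReal.ofReal δ := by
    have hs : HasSum (fun k : ℕ => δ / 2 * (1 / 2) ^ k) δ := by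
      simpa using hasSum_geometric_two.mul_left (δ / 2)
    calc P allBad ≤ ∑' k : ℕ, ENNReal.ofReal (δ / 2 * (1 / 2) ^ k) :=
          (measure_iUnion_le _).trans (ENNReal.tsum_le_tsum hlayer)
      _ = ENNReal.ofReal δ := by
          rw [← ENNReal.ofReal_tsum_of_nonneg (fun k => by positivity) hs.summable, hs.tsum_eq]
  have hcompl : ENNReal.ofReal (1 - δ) ≤ P allBadᶜ := by
    have hone : 1 ≤ P allBad + P allBadᶜ := by
      rw [← measure_univ (μ := P), ← Set.union_compl_self allBad]
      exact measure_union_le _ _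
    rw [ENNReal.ofReal_sub _ hδ0.le, ENNReal.ofReal_one, tsub_le_iff_left]
    exact hone.trans (add_le_add hallBad le_rfl)
  refine hcompl.trans (measure_mono fun S hS => ?_)
  intro τ hτ j hj U hU
  obtain ⟨k, rfl⟩ := Nat.exists_eq_succ_of_ne_zero hτ.ne'
  have hGap : generalizationGap μ (qloss (V (k + 1) j) (k + 1) O ρ U) S
      ≤ 9 * C * Real.sqrt
        (8 * (192 * (((k + 1 : ℕ) : ℝ) * (1 + Real.log (k + 1 : ℕ))) + u (k + 1)) / N) := by
    by_contra! hlt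
    exact hS (Set.mem_iUnion.2 ⟨k, Set.mem_iUnion₂.2
      ⟨j, Finset.mem_range.2 hj, ⟨U, hU⟩, hlt⟩⟩)
  have hτ1 : (1 : ℝ) ≤ ((k + 1 : ℕ) : ℝ) := by exact_mod_cast hτ
  have hG1 : (1 : ℝ) ≤ G (k + 1) := by exact_mod_cast (Nat.zero_le j).trans_lt hj
  have hlog := Real.log_nonneg hτ1
  exact hGap.trans (nine_mul_sqrt_deviation_le hC hn (Real.log_nonneg hG1) hd0
    (by linarith) (le_mul_of_one_le_right (by linarith) (by linarith)))
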